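/- The ring of invariants of the binary icosahedral group Ī acting on ℂ[X,Y] is the subalgebra generated by F₃₀, F₂₀ and F₁₂; that is, a polynomial P ∈ ℂ[X,Y] satisfies P(a₁₁X + a₁₂Y, a₂₁X + a₂₂Y) = P(X,Y) for every (a_{ij}) ∈ Ī if and only if P lies in the ℂ-subalgebra of ℂ[X,Y] generated by F₃₀, F₂₀ and F₁₂. -/

import Mathlib

noncomputable section
open Matrix MvPolynomial

def zeta5 : ℂ := Complex.exp (2 * Real.pi * Complex.I / 5)

def alpha : Matrix (Fin 2) (Fin 2) ℂ := -(Matrix.of ![![zeta5 ^ 3, 0], ![0, zeta5 ^ 2]])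
def beta : Matrix (Fin 2) (Fin 2) ℂ := Matrix.of ![![0, 1], ![-1, 0]]
def gamma : Matrix (Fin 2) (Fin 2) ℂ :=
  (zeta5 ^ 2 - zeta5 ^ 3)⁻¹ •
    Matrix.of ![![zeta5 + zeta5⁻¹, 1], ![1, -(zeta5 + zeta5⁻¹)]]

def Ibar : Subgroup (GL (Fin 2) ℂ) :=
  Subgroup.closure {g : GL (Fin 2) ℂ |
    (g : Matrix (Fin 2) (Fin 2) ℂ) = alpha ∨ (g : Matrix (Fin 2) (Fin 2) ℂ) = beta ∨
      (g : Matrix (Fin 2) (Fin 2) ℂ) = gamma}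

/-- The action of a `2 × 2` matrix on `ℂ[X, Y]` by linear substitution of variables. -/
def act (A : Matrix (Fin 2) (Fin 2) ℂ) (P : MvPolynomial (Fin 2) ℂ) : MvPolynomial (Fin 2) ℂ :=
  aeval (fun i => C (A i 0) * X 0 + C (A i 1) * X 1) P

def F30 : MvPolynomial (Fin 2) ℂ :=
  X 0 ^ 30 + 522 * (X 0 ^ 25 * X 1 ^ 5 - X 0 ^ 5 * X 1 ^ 25)
    - 10005 * (X 0 ^ 20 * X 1 ^ 10 + X 0 ^ 10 * X 1 ^ 20) + X 1 ^ 30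

def F20 : MvPolynomial (Fin 2) ℂ :=
  X 0 ^ 20 - 228 * (X 0 ^ 15 * X 1 ^ 5 - X 0 ^ 5 * X 1 ^ 15)
    + 494 * X 0 ^ 10 * X 1 ^ 10 + X 1 ^ 20

def F12 : MvPolynomial (Fin 2) ℂ :=
  X 0 * X 1 * (X 0 ^ 10 + 11 * X 0 ^ 5 * X 1 ^ 5 - X 1 ^ 10)

section identities
variable {R : Type*} [CommRing R]

theorem id_p (x y t : R) (h : t^2 = 1 - t) : ((t*x+y)^5)^2 + ((x-t*y)^5)^2 =
    ((35)*x^10 + (-210)*x^9*y^1 + (630)*x^8*y^2 + (-840)*x^7*y^3 + (1470)*x^6*y^4 + (1470)*x^4*y^6 + (840)*x^3*y^7 + (630)*x^2*y^8 + (210)*x^1*y^9 + (35)*y^10)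
    + t * ((-55)*x^10 + (330)*x^9*y^1 + (-990)*x^8*y^2 + (1320)*x^7*y^3 + (-2310)*x^6*y^4 + (-2310)*x^4*y^6 + (-1320)*x^3*y^7 + (-990)*x^2*y^8 + (-330)*x^1*y^9 + (-55)*y^10) := by
  have h2 : t^2 = 1 + (-1)*t := by linear_combination h
  have h3 : t^3 = -1 + (2)*t := by linear_combination t*h2 + (-1)*h
  have h4 : t^4 = 2 + (-3)*t := by linear_combination t*h3 + (2)*h
  have h5 : t^5 = -3 + (5)*t := by linear_combination t*h4 + (-3)*h
  have h6 : t^6 = 5 + (-8)*t := by linear_combination t*h5 + (5)*h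
  have h7 : t^7 = -8 + (13)*t := by linear_combination t*h6 + (-8)*h
  have h8 : t^8 = 13 + (-21)*t := by linear_combination t*h7 + (13)*h
  have h9 : t^9 = -21 + (34)*t := by linear_combination t*h8 + (-21)*h
  have h10 : t^10 = 34 + (-55)*t := by linear_combination t*h9 + (34)*h
  linear_combination ((45)*x^8*y^2 + (45)*x^2*y^8)*h2 + ((-120)*x^7*y^3 + (120)*x^3*y^7)*h3 + ((210)*x^6*y^4 + (210)*x^4*y^6)*h4 + ((210)*x^6*y^4 + (210)*x^4*y^6)*h6 + ((120)*x^7*y^3 + (-120)*x^3*y^7)*h7 + ((45)*x^8*y^2 + (45)*x^2*y^8)*h8 + ((10)*x^9*y^1 + (-10)*x^1*y^9)*h9 + ((1)*x^10 + (1)*y^10)*h10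

theorem id_q (x y t : R) (h : t^2 = 1 - t) : (t*x+y)^5 * (x-t*y)^5 =
    ((-3)*x^10 + (-15)*x^9*y^1 + (-15)*x^8*y^2 + (30)*x^7*y^3 + (45)*x^6*y^4 + (-33)*x^5*y^5 + (-45)*x^4*y^6 + (30)*x^3*y^7 + (15)*x^2*y^8 + (-15)*x^1*y^9 + (3)*y^10)
    + t * ((5)*x^10 + (25)*x^9*y^1 + (25)*x^8*y^2 + (-50)*x^7*y^3 + (-75)*x^6*y^4 + (55)*x^5*y^5 + (75)*x^4*y^6 + (-50)*x^3*y^7 + (-25)*x^2*y^8 + (25)*x^1*y^9 + (-5)*y^10) := by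
  have h2 : t^2 = 1 + (-1)*t := by linear_combination h
  have h3 : t^3 = -1 + (2)*t := by linear_combination t*h2 + (-1)*h
  have h4 : t^4 = 2 + (-3)*t := by linear_combination t*h3 + (2)*h
  have h5 : t^5 = -3 + (5)*t := by linear_combination t*h4 + (-3)*h
  have h6 : t^6 = 5 + (-8)*t := by linear_combination t*h5 + (5)*h
  have h7 : t^7 = -8 + (13)*t := by linear_combination t*h6 + (-8)*h
  have h8 : t^8 = 13 + (-21)*t := by linear_combination t*h7 + (13)*h
  have h9 : t^9 = -21 + (34)*t := by linear_combination t*h8 + (-21)*h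
  have h10 : t^10 = 34 + (-55)*t := by linear_combination t*h9 + (34)*h
  linear_combination ((10)*x^7*y^3 + (-25)*x^5*y^5 + (10)*x^3*y^7)*h2 + ((10)*x^8*y^2 + (-50)*x^6*y^4 + (50)*x^4*y^6 + (-10)*x^2*y^8)*h3 + ((5)*x^9*y^1 + (-50)*x^7*y^3 + (100)*x^5*y^5 + (-50)*x^3*y^7 + (5)*x^1*y^9)*h4 + ((1)*x^10 + (-25)*x^8*y^2 + (100)*x^6*y^4 + (-100)*x^4*y^6 + (25)*x^2*y^8 + (-1)*y^10)*h5 + ((-5)*x^9*y^1 + (50)*x^7*y^3 + (-100)*x^5*y^5 + (50)*x^3*y^7 + (-5)*x^1*y^9)*h6 + ((10)*x^8*y^2 + (-50)*x^6*y^4 + (50)*x^4*y^6 + (-10)*x^2*y^8)*h7 + ((-10)*x^7*y^3 + (25)*x^5*y^5 + (-10)*x^3*y^7)*h8 + ((5)*x^6*y^4 + (-5)*x^4*y^6)*h9 + ((-1)*x^5*y^5)*h10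

theorem id_r (x y t : R) (h : t^2 = 1 - t) : ((t*x+y)^5)^2 - ((x-t*y)^5)^2 =
    ((33)*x^10 + (-210)*x^9*y^1 + (540)*x^8*y^2 + (-1080)*x^7*y^3 + (630)*x^6*y^4 + (-1512)*x^5*y^5 + (-630)*x^4*y^6 + (-1080)*x^3*y^7 + (-540)*x^2*y^8 + (-210)*x^1*y^9 + (-33)*y^10)
    + t * ((-55)*x^10 + (350)*x^9*y^1 + (-900)*x^8*y^2 + (1800)*x^7*y^3 + (-1050)*x^6*y^4 + (2520)*x^5*y^5 + (1050)*x^4*y^6 + (1800)*x^3*y^7 + (900)*x^2*y^8 + (350)*x^1*y^9 + (55)*y^10) := by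
  have h2 : t^2 = 1 + (-1)*t := by linear_combination h
  have h3 : t^3 = -1 + (2)*t := by linear_combination t*h2 + (-1)*h
  have h4 : t^4 = 2 + (-3)*t := by linear_combination t*h3 + (2)*h
  have h5 : t^5 = -3 + (5)*t := by linear_combination t*h4 + (-3)*h
  have h6 : t^6 = 5 + (-8)*t := by linear_combination t*h5 + (5)*h
  have h7 : t^7 = -8 + (13)*t := by linear_combination t*h6 + (-8)*h
  have h8 : t^8 = 13 + (-21)*t := by linear_combination t*h7 + (13)*h
  have h9 : t^9 = -21 + (34)*t := by linear_combination t*h8 + (-21)*h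
  have h10 : t^10 = 34 + (-55)*t := by linear_combination t*h9 + (34)*h
  linear_combination ((-45)*x^8*y^2 + (45)*x^2*y^8)*h2 + ((120)*x^7*y^3 + (120)*x^3*y^7)*h3 + ((-210)*x^6*y^4 + (210)*x^4*y^6)*h4 + ((504)*x^5*y^5)*h5 + ((210)*x^6*y^4 + (-210)*x^4*y^6)*h6 + ((120)*x^7*y^3 + (120)*x^3*y^7)*h7 + ((45)*x^8*y^2 + (-45)*x^2*y^8)*h8 + ((10)*x^9*y^1 + (10)*x^1*y^9)*h9 + ((1)*x^10 + (-1)*y^10)*h10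

theorem id_m (x y t : R) (h : t^2 = 1 - t) : (t*x+y) * (x-t*y) =
    (0)
    + t * ((1)*x^2 + (1)*x^1*y^1 + (-1)*y^2) := by
  have h2 : t^2 = 1 + (-1)*t := by linear_combination h
  have h3 : t^3 = -1 + (2)*t := by linear_combination t*h2 + (-1)*h
  have h4 : t^4 = 2 + (-3)*t := by linear_combination t*h3 + (2)*h
  have h5 : t^5 = -3 + (5)*t := by linear_combination t*h4 + (-3)*h
  have h6 : t^6 = 5 + (-8)*t := by linear_combination t*h5 + (5)*h
  have h7 : t^7 = -8 + (13)*t := by linear_combination t*h6 + (-8)*h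
  have h8 : t^8 = 13 + (-21)*t := by linear_combination t*h7 + (13)*h
  have h9 : t^9 = -21 + (34)*t := by linear_combination t*h8 + (-21)*h
  have h10 : t^10 = 34 + (-55)*t := by linear_combination t*h9 + (34)*h
  linear_combination ((-1)*x^1*y^1)*h2

theorem id_w (t : R) (h : t^2 = 1 - t) : (t-2)^6 = 625 + (-1000)*t ∧ (t-2)^10 = 106250 + (-171875)*t ∧ (t-2)^15 = -65859375 + (106562500)*t := by
  have w2 : (t-2)^2 = 5 + (-5)*t := by linear_combination h
  have w3 : (t-2)^3 = -15 + (20)*t := by linear_combination (t-2)*w2 + (-5)*h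
  have w4 : (t-2)^4 = 50 + (-75)*t := by linear_combination (t-2)*w3 + (20)*h
  have w5 : (t-2)^5 = -175 + (275)*t := by linear_combination (t-2)*w4 + (-75)*h
  have w6 : (t-2)^6 = 625 + (-1000)*t := by linear_combination (t-2)*w5 + (275)*h
  have w7 : (t-2)^7 = -2250 + (3625)*t := by linear_combination (t-2)*w6 + (-1000)*h
  have w8 : (t-2)^8 = 8125 + (-13125)*t := by linear_combination (t-2)*w7 + (3625)*h
  have w9 : (t-2)^9 = -29375 + (47500)*t := by linear_combination (t-2)*w8 + (-13125)*h
  have w10 : (t-2)^10 = 106250 + (-171875)*t := by linear_combination (t-2)*w9 + (47500)*h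
  have w11 : (t-2)^11 = -384375 + (621875)*t := by linear_combination (t-2)*w10 + (-171875)*h
  have w12 : (t-2)^12 = 1390625 + (-2250000)*t := by linear_combination (t-2)*w11 + (621875)*h
  have w13 : (t-2)^13 = -5031250 + (8140625)*t := by linear_combination (t-2)*w12 + (-2250000)*h
  have w14 : (t-2)^14 = 18203125 + (-29453125)*t := by linear_combination (t-2)*w13 + (8140625)*h
  have w15 : (t-2)^15 = -65859375 + (106562500)*t := by linear_combination (t-2)*w14 + (-29453125)*h
  exact ⟨w6, w10, w15⟩

theorem id_F12 (x y t : R) (h : t^2 = 1 - t) : (t*x+y)*(x-t*y)*((t*x+y)^10+11*(t*x+y)^5*(x-t*y)^5-(x-t*y)^10) = (t-2)^6*(x*y*(x^10+11*x^5*y^5-y^10)) := by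
  obtain ⟨w6, w10, w15⟩ := id_w t h
  have e : ∀ u v : R, u*v*(u^10+11*u^5*v^5-v^10) = (u*v)*((u^5)^2-(v^5)^2 + 11*(u^5*v^5)) := by intros; ring
  rw [e, id_m x y t h, id_q x y t h, id_r x y t h, w6]
  linear_combination (((1)*x^2 + (1)*x^1*y^1 + (-1)*y^2)*((625)*x^9*y^1 + (-625)*x^8*y^2 + (1250)*x^7*y^3 + (-1875)*x^6*y^4 + (3125)*x^5*y^5 + (1875)*x^4*y^6 + (1250)*x^3*y^7 + (625)*x^2*y^8 + (625)*x^1*y^9))*h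

theorem id_F20 (x y t : R) (h : t^2 = 1 - t) : (t*x+y)^20 - 228*((t*x+y)^15*(x-t*y)^5 - (t*x+y)^5*(x-t*y)^15) + 494*(t*x+y)^10*(x-t*y)^10 + (x-t*y)^20 = (t-2)^10*(x^20 - 228*(x^15*y^5 - x^5*y^15) + 494*x^10*y^10 + y^20) := by
  obtain ⟨w6, w10, w15⟩ := id_w t h
  have e : ∀ u v : R, u^20 - 228*(u^15*v^5 - u^5*v^15) + 494*u^10*v^10 + v^20 = ((u^5)^2+(v^5)^2)^2 - 228*(u^5*v^5)*((u^5)^2-(v^5)^2) + 492*(u^5*v^5)^2 := by intros; ring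
  rw [e, id_p x y t h, id_q x y t h, id_r x y t h, w10]
  linear_combination (((-55)*x^10 + (330)*x^9*y^1 + (-990)*x^8*y^2 + (1320)*x^7*y^3 + (-2310)*x^6*y^4 + (-2310)*x^4*y^6 + (-1320)*x^3*y^7 + (-990)*x^2*y^8 + (-330)*x^1*y^9 + (-55)*y^10)^2 - 228*((5)*x^10 + (25)*x^9*y^1 + (25)*x^8*y^2 + (-50)*x^7*y^3 + (-75)*x^6*y^4 + (55)*x^5*y^5 + (75)*x^4*y^6 + (-50)*x^3*y^7 + (-25)*x^2*y^8 + (25)*x^1*y^9 + (-5)*y^10)*((-55)*x^10 + (350)*x^9*y^1 + (-900)*x^8*y^2 + (1800)*x^7*y^3 + (-1050)*x^6*y^4 + (2520)*x^5*y^5 + (1050)*x^4*y^6 + (1800)*x^3*y^7 + (900)*x^2*y^8 + (350)*x^1*y^9 + (55)*y^10) + 492*((5)*x^10 + (25)*x^9*y^1 + (25)*x^8*y^2 + (-50)*x^7*y^3 + (-75)*x^6*y^4 + (55)*x^5*y^5 + (75)*x^4*y^6 + (-50)*x^3*y^7 + (-25)*x^2*y^8 + (25)*x^1*y^9 + (-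5)*y^10)^2)*h

theorem id_s (x y t : R) (h : t^2 = 1 - t) : (((t*x+y)^5)^2 + ((x-t*y)^5)^2)^2 + 522*((t*x+y)^5 * (x-t*y)^5)*(((t*x+y)^5)^2 - ((x-t*y)^5)^2) - 10008*((t*x+y)^5 * (x-t*y)^5)^2 = ((-531250)*x^20 + (-3187500)*x^19*y^1 + (-9562500)*x^18*y^2 + (-12750000)*x^17*y^3 + (41437500)*x^16*y^4 + (105187500)*x^15*y^5 + (3187500)*x^14*y^6 + (-197625000)*x^13*y^7 + (28687500)*x^12*y^8 + (213562500)*x^11*y^9 + (-39312500)*x^10*y^10 + (-213562500)*x^9*y^11 + (28687500)*x^8*y^12 + (197625000)*x^7*y^13 + (3187500)*x^6*y^14 + (-105187500)*x^5*y^15 + (41437500)*x^4*y^16 + (12750000)*x^3*y^17 + (-9562500)*x^2*y^18 + (3187500)*x^1*y^19 + (-531250)*y^20)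
    + t * ((859375)*x^20 + (5156250)*x^19*y^1 + (15468750)*x^18*y^2 + (20625000)*x^17*y^3 + (-67031250)*x^16*y^4 + (-170156250)*x^15*y^5 + (-5156250)*x^14*y^6 + (319687500)*x^13*y^7 + (-46406250)*x^12*y^8 + (-345468750)*x^11*y^9 + (63593750)*x^10*y^10 + (345468750)*x^9*y^11 + (-46406250)*x^8*y^12 + (-319687500)*x^7*y^13 + (-5156250)*x^6*y^14 + (170156250)*x^5*y^15 + (-67031250)*x^4*y^16 + (-20625000)*x^3*y^17 + (15468750)*x^2*y^18 + (-5156250)*x^1*y^19 + (859375)*y^20) := by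
  rw [id_p x y t h, id_q x y t h, id_r x y t h]
  linear_combination (((-55)*x^10 + (330)*x^9*y^1 + (-990)*x^8*y^2 + (1320)*x^7*y^3 + (-2310)*x^6*y^4 + (-2310)*x^4*y^6 + (-1320)*x^3*y^7 + (-990)*x^2*y^8 + (-330)*x^1*y^9 + (-55)*y^10)^2 + 522*((5)*x^10 + (25)*x^9*y^1 + (25)*x^8*y^2 + (-50)*x^7*y^3 + (-75)*x^6*y^4 + (55)*x^5*y^5 + (75)*x^4*y^6 + (-50)*x^3*y^7 + (-25)*x^2*y^8 + (25)*x^1*y^9 + (-5)*y^10)*((-55)*x^10 + (350)*x^9*y^1 + (-900)*x^8*y^2 + (1800)*x^7*y^3 + (-1050)*x^6*y^4 + (2520)*x^5*y^5 + (1050)*x^4*y^6 + (1800)*x^3*y^7 + (900)*x^2*y^8 + (350)*x^1*y^9 + (55)*y^10) - 10008*((5)*x^10 + (25)*x^9*y^1 + (25)*x^8*y^2 + (-50)*x^7*y^3 + (-75)*x^6*y^4 + (55)*x^5*y^5 + (75)*x^4*y^6 + (-50)*x^3*y^7 + (-25)*x^2*y^8 + (25)*x^1*y^9 + (-5)*y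^10)^2)*h

theorem id_F30 (x y t : R) (h : t^2 = 1 - t) : (t*x+y)^30 + 522*((t*x+y)^25*(x-t*y)^5 - (t*x+y)^5*(x-t*y)^25) - 10005*((t*x+y)^20*(x-t*y)^10 + (t*x+y)^10*(x-t*y)^20) + (x-t*y)^30 = (t-2)^15*(x^30 + 522*(x^25*y^5 - x^5*y^25) - 10005*(x^20*y^10 + x^10*y^20) + y^30) := by
  obtain ⟨w6, w10, w15⟩ := id_w t h
  have e : ∀ u v : R, u^30 + 522*(u^25*v^5 - u^5*v^25) - 10005*(u^20*v^10 + u^10*v^20) + v^30 = ((u^5)^2+(v^5)^2)*(((u^5)^2+(v^5)^2)^2 + 522*(u^5*v^5)*((u^5)^2-(v^5)^2) - 10008*(u^5*v^5)^2) := by intros; ring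
  rw [e, id_s x y t h, id_p x y t h, w15]
  linear_combination (((-55)*x^10 + (330)*x^9*y^1 + (-990)*x^8*y^2 + (1320)*x^7*y^3 + (-2310)*x^6*y^4 + (-2310)*x^4*y^6 + (-1320)*x^3*y^7 + (-990)*x^2*y^8 + (-330)*x^1*y^9 + (-55)*y^10)*((859375)*x^20 + (5156250)*x^19*y^1 + (15468750)*x^18*y^2 + (20625000)*x^17*y^3 + (-67031250)*x^16*y^4 + (-170156250)*x^15*y^5 + (-5156250)*x^14*y^6 + (319687500)*x^13*y^7 + (-46406250)*x^12*y^8 + (-345468750)*x^11*y^9 + (63593750)*x^10*y^10 + (345468750)*x^9*y^11 + (-46406250)*x^8*y^12 + (-319687500)*x^7*y^13 + (-5156250)*x^6*y^14 + (170156250)*x^5*y^15 + (-67031250)*x^4*y^16 + (-20625000)*x^3*y^17 + (15468750)*x^2*y^18 + (-5156250)*x^1*y^19 + (859375)*y^20))*h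

end identities
/-- The substitution action as an algebra homomorphism. -/
def actHom (A : Matrix (Fin 2) (Fin 2) ℂ) :
    MvPolynomial (Fin 2) ℂ →ₐ[ℂ] MvPolynomial (Fin 2) ℂ :=
  aeval (fun i => C (A i 0) * X 0 + C (A i 1) * X 1)

theorem act_eq (A : Matrix (Fin 2) (Fin 2) ℂ) (P : MvPolynomial (Fin 2) ℂ) :
    act A P = actHom A P := rfl

theorem actHom_X (A : Matrix (Fin 2) (Fin 2) ℂ) (i : Fin 2) :
    actHom A (X i) = C (A i 0) * X 0 + C (A i 1) * X 1 := by
  simp [actHom]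

theorem actHom_C (A : Matrix (Fin 2) (Fin 2) ℂ) (c : ℂ) :
    actHom A (C c) = C c := by
  simp [actHom]

theorem actHom_one (P : MvPolynomial (Fin 2) ℂ) : actHom 1 P = P := by
  have : actHom 1 = AlgHom.id ℂ _ := by
    apply MvPolynomial.algHom_ext
    intro i
    rw [actHom_X]
    fin_cases i <;> simp [Matrix.one_apply]
  rw [this]; rfl

theorem actHom_mul (A B : Matrix (Fin 2) (Fin 2) ℂ) (P : MvPolynomial (Fin 2) ℂ) :
    actHom (B * A) P = actHom A (actHom B P) := by
  have : actHom (B * A) = (actHom A).comp (actHom B) := by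
    apply MvPolynomial.algHom_ext
    intro i
    simp only [AlgHom.comp_apply, actHom_X, map_add, map_mul, actHom_C, Matrix.mul_apply,
      Fin.sum_univ_two]
    ring
  rw [this]; rfl

theorem eval_actHom (A : Matrix (Fin 2) (Fin 2) ℂ) (P : MvPolynomial (Fin 2) ℂ) (v : Fin 2 → ℂ) :
    eval v (actHom A P) = eval (fun i => A i 0 * v 0 + A i 1 * v 1) P := by
  induction P using MvPolynomial.induction_on with
  | C a => simp
  | add p q hp hq => simp [hp, hq]
  | mul_X p i hp => rw [map_mul, map_mul, hp, actHom_X]; simp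

theorem actHom_homog (A : Matrix (Fin 2) (Fin 2) ℂ) (P : MvPolynomial (Fin 2) ℂ) (n : ℕ)
    (hP : P.IsHomogeneous n) : (actHom A P).IsHomogeneous n := by
  have := hP.aeval (fun i => C (A i 0) * X 0 + C (A i 1) * X 1 : Fin 2 → MvPolynomial (Fin 2) ℂ)
    (n := 1) (fun i => (isHomogeneous_C_mul_X _ _).add (isHomogeneous_C_mul_X _ _))
  simpa [actHom] using this

theorem actHom_comp (A : Matrix (Fin 2) (Fin 2) ℂ) (P : MvPolynomial (Fin 2) ℂ) (n : ℕ) :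
    actHom A (homogeneousComponent n P) = homogeneousComponent n (actHom A P) := by
  conv_rhs => rw [← sum_homogeneousComponent P]
  rw [map_sum, map_sum]
  have key : ∀ i, homogeneousComponent n (actHom A (homogeneousComponent i P))
      = if i = n then actHom A (homogeneousComponent i P) else 0 := by
    intro i
    have := homogeneousComponent_of_mem (m := n) (n := i)
      ((mem_homogeneousSubmodule _ _).2
        (actHom_homog A _ i (homogeneousComponent_isHomogeneous i P)))
    rw [this]
    simp only [eq_comm]
  simp only [key]
  rw [Finset.sum_ite_eq']
  split_ifs with h
  · rfl
  · rw [homogeneousComponent_eq_zero, map_zero]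
    simpa using h

/-! ### The root of unity -/

theorem zeta_prim : IsPrimitiveRoot zeta5 5 := by
  have := Complex.isPrimitiveRoot_exp 5 (by norm_num)
  simpa [zeta5] using this

theorem zeta_ne : zeta5 ≠ 0 := zeta_prim.ne_zero (by norm_num)

theorem zeta_pow : zeta5 ^ 5 = 1 := zeta_prim.pow_eq_one

theorem zeta_sum : 1 + zeta5 + zeta5 ^ 2 + zeta5 ^ 3 + zeta5 ^ 4 = 0 := by
  have := zeta_prim.geom_sum_eq_zero (by norm_num)
  simpa [Finset.sum_range_succ] using this

def tt : ℂ := zeta5 + zeta5 ^ 4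
def kk : ℂ := (zeta5 ^ 2 - zeta5 ^ 3)⁻¹

theorem zeta_inv : zeta5⁻¹ = zeta5 ^ 4 := by
  apply inv_eq_of_mul_eq_one_right
  linear_combination zeta_pow

theorem tt_sq : tt ^ 2 = 1 - tt := by
  unfold tt
  linear_combination zeta_sum + (zeta5 ^ 3 + 2) * zeta_pow

theorem k_sq : (zeta5 ^ 2 - zeta5 ^ 3) ^ 2 = tt - 2 := by
  unfold tt
  linear_combination (zeta5 - 2) * zeta_pow

theorem tt_sub_ne : tt - 2 ≠ 0 := by
  intro h
  have : tt = 2 := by linear_combination h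
  have h2 := tt_sq
  rw [this] at h2
  norm_num at h2

theorem tt_ne : tt ≠ 0 := by
  intro h
  have h2 := tt_sq
  rw [h] at h2
  norm_num at h2

theorem kk_sq : kk ^ 2 * (tt - 2) = 1 := by
  rw [kk, ← k_sq, inv_pow]
  apply inv_mul_cancel₀
  rw [k_sq]; exact tt_sub_ne

theorem kk_ne : kk ≠ 0 := by
  intro h
  have := kk_sq
  rw [h] at this
  norm_num at this

theorem alpha_X0 : actHom alpha (X 0) = C (-zeta5 ^ 3) * X 0 := by
  rw [actHom_X]; simp [alpha]
theorem alpha_X1 : actHom alpha (X 1) = C (-zeta5 ^ 2) * X 1 := by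
  rw [actHom_X]; simp [alpha]
theorem beta_X0 : actHom beta (X 0) = X 1 := by
  rw [actHom_X]; simp [beta]
theorem beta_X1 : actHom beta (X 1) = -X 0 := by
  rw [actHom_X]; simp [beta]
theorem gamma_X0 : actHom gamma (X 0) = C kk * (C tt * X 0 + X 1) := by
  rw [actHom_X]; simp [gamma, zeta_inv, kk, tt]; ring
theorem gamma_X1 : actHom gamma (X 1) = C kk * (X 0 - C tt * X 1) := by
  rw [actHom_X]; simp [gamma, zeta_inv, kk, tt]; ring

/-! ### Invariance under the generators -/

def GenInv (P : MvPolynomial (Fin 2) ℂ) : Prop :=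
  actHom alpha P = P ∧ actHom beta P = P ∧ actHom gamma P = P

theorem det_alpha : alpha.det ≠ 0 := by
  rw [Matrix.det_fin_two]
  simp [alpha, zeta_ne]

theorem det_beta : beta.det ≠ 0 := by
  rw [Matrix.det_fin_two]
  simp [beta]

theorem det_gamma : gamma.det ≠ 0 := by
  have : gamma.det = 1 := by
    rw [Matrix.det_fin_two]
    simp only [gamma, zeta_inv, Matrix.smul_apply, Matrix.of_apply, Matrix.cons_val_zero,
      Matrix.cons_val_one, smul_eq_mul]
    change kk * tt * (kk * -tt) - kk * 1 * (kk * 1) = 1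
    linear_combination kk_sq - kk ^ 2 * tt_sq
  rw [this]; exact one_ne_zero

theorem inv_iff (P : MvPolynomial (Fin 2) ℂ) :
    (∀ g ∈ Ibar, act (g : Matrix (Fin 2) (Fin 2) ℂ) P = P) ↔ GenInv P := by
  constructor
  · intro h
    refine ⟨?_, ?_, ?_⟩
    · exact h (Matrix.GeneralLinearGroup.mkOfDetNeZero alpha det_alpha)
        (Subgroup.subset_closure (Or.inl rfl))
    · exact h (Matrix.GeneralLinearGroup.mkOfDetNeZero beta det_beta)
        (Subgroup.subset_closure (Or.inr (Or.inl rfl)))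
    · exact h (Matrix.GeneralLinearGroup.mkOfDetNeZero gamma det_gamma)
        (Subgroup.subset_closure (Or.inr (Or.inr rfl)))
  · rintro ⟨ha, hb, hc⟩ g hg
    have key : ∀ g : GL (Fin 2) ℂ, g ∈ Ibar →
        actHom (g : Matrix (Fin 2) (Fin 2) ℂ) P = P := by
      intro g hg
      refine Subgroup.closure_induction
        (p := fun (g : GL (Fin 2) ℂ) _ => actHom (g : Matrix (Fin 2) (Fin 2) ℂ) P = P) ?_ ?_ ?_ ?_ hg
      · intro x hx
        rcases hx with h | h | h
        · rw [h]; exact ha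
        · rw [h]; exact hb
        · rw [h]; exact hc
      · exact actHom_one P
      · intro x y _ _ hx hy
        have e : ((x * y : GL (Fin 2) ℂ) : Matrix (Fin 2) (Fin 2) ℂ) = x.val * y.val := rfl
        rw [e, actHom_mul, hx, hy]
      · intro x _ hx
        have e : x.val * (x⁻¹ : GL (Fin 2) ℂ).val = 1 := x.mul_inv
        have h2 := actHom_mul (x⁻¹ : GL (Fin 2) ℂ).val x.val P
        rw [e, actHom_one, hx] at h2
        exact h2.symm
    exact key g hg

theorem GenInv.mul {P Q : MvPolynomial (Fin 2) ℂ} (hP : GenInv P) (hQ : GenInv Q) : GenInv (P * Q) := by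
  obtain ⟨a, b, c⟩ := hP
  obtain ⟨a₂, b₂, c₂⟩ := hQ
  exact ⟨by rw [map_mul, a, a₂], by rw [map_mul, b, b₂], by rw [map_mul, c, c₂]⟩

theorem GenInv.add {P Q : MvPolynomial (Fin 2) ℂ} (hP : GenInv P) (hQ : GenInv Q) : GenInv (P + Q) := by
  obtain ⟨a, b, c⟩ := hP
  obtain ⟨a₂, b₂, c₂⟩ := hQ
  exact ⟨by rw [map_add, a, a₂], by rw [map_add, b, b₂], by rw [map_add, c, c₂]⟩

theorem GenInv.sub {P Q : MvPolynomial (Fin 2) ℂ} (hP : GenInv P) (hQ : GenInv Q) : GenInv (P - Q) := by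
  obtain ⟨a, b, c⟩ := hP
  obtain ⟨a₂, b₂, c₂⟩ := hQ
  exact ⟨by rw [map_sub, a, a₂], by rw [map_sub, b, b₂], by rw [map_sub, c, c₂]⟩

theorem GenInv.const (c : ℂ) : GenInv (C c) := ⟨actHom_C _ _, actHom_C _ _, actHom_C _ _⟩

theorem GenInv.pow {P : MvPolynomial (Fin 2) ℂ} (hP : GenInv P) (n : ℕ) : GenInv (P ^ n) := by
  obtain ⟨a, b, c⟩ := hP
  exact ⟨by rw [map_pow, a], by rw [map_pow, b], by rw [map_pow, c]⟩

theorem GenInv.comp {P : MvPolynomial (Fin 2) ℂ} (hP : GenInv P) (n : ℕ) :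
    GenInv (homogeneousComponent n P) := by
  obtain ⟨a, b, c⟩ := hP
  exact ⟨by rw [actHom_comp, a], by rw [actHom_comp, b], by rw [actHom_comp, c]⟩

theorem GenInv.cancel {F Q : MvPolynomial (Fin 2) ℂ} (hF : GenInv F) (h0 : F ≠ 0) (h : GenInv (F * Q)) :
    GenInv Q := by
  obtain ⟨a, b, c⟩ := hF
  obtain ⟨a₂, b₂, c₂⟩ := h
  rw [map_mul, a] at a₂
  rw [map_mul, b] at b₂
  rw [map_mul, c] at c₂
  exact ⟨mul_left_cancel₀ h0 a₂, mul_left_cancel₀ h0 b₂, mul_left_cancel₀ h0 c₂⟩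

theorem Cz_pow : (C zeta5 : MvPolynomial (Fin 2) ℂ) ^ 5 = 1 := by
  rw [← C_pow, zeta_pow, C_1]

theorem Ct_sq : (C tt : MvPolynomial (Fin 2) ℂ) ^ 2 = 1 - C tt := by
  rw [← C_pow, tt_sq, C_sub, C_1]

theorem Ck_sq : (C kk : MvPolynomial (Fin 2) ℂ) ^ 2 * (C tt - 2) = 1 := by
  have h := congrArg (C : ℂ → MvPolynomial (Fin 2) ℂ) kk_sq
  rw [C_mul, C_pow, C_sub, C_1] at h
  exact h

theorem alpha_X0_5 : actHom alpha (X 0) ^ 5 = -X 0 ^ 5 := by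
  rw [alpha_X0, C_neg, C_pow]
  linear_combination (-(C zeta5 ^ 10 + C zeta5 ^ 5 + 1) * X 0 ^ 5) * Cz_pow
theorem alpha_X1_5 : actHom alpha (X 1) ^ 5 = -X 1 ^ 5 := by
  rw [alpha_X1, C_neg, C_pow]
  linear_combination (-(C zeta5 ^ 5 + 1) * X 1 ^ 5) * Cz_pow
theorem alpha_X01 : actHom alpha (X 0) * actHom alpha (X 1) = X 0 * X 1 := by
  rw [alpha_X0, alpha_X1, C_neg, C_pow, C_neg, C_pow]
  linear_combination (X 0 * X 1) * Cz_pow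

theorem inv_F12 : GenInv F12 := by
  refine ⟨?_, ?_, ?_⟩
  · have e : ∀ u v : MvPolynomial (Fin 2) ℂ, u * v * (u ^ 10 + 11 * u ^ 5 * v ^ 5 - v ^ 10)
        = u * v * ((u ^ 5) ^ 2 + 11 * u ^ 5 * v ^ 5 - (v ^ 5) ^ 2) := by intros; ring
    simp only [F12, e, map_add, map_sub, map_mul, map_pow, map_ofNat]
    rw [alpha_X0_5, alpha_X1_5, alpha_X01]
    ring
  · simp only [F12, map_add, map_sub, map_mul, map_pow, map_ofNat, beta_X0, beta_X1]
    ring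
  · simp only [F12, map_add, map_sub, map_mul, map_pow, map_ofNat, gamma_X0, gamma_X1]
    have e := id_F12 (X 0 : MvPolynomial (Fin 2) ℂ) (X 1) (C tt) Ct_sq
    have e2 : (C kk ^ 2 * (C tt - 2) : MvPolynomial (Fin 2) ℂ) ^ 6 = 1 := by rw [Ck_sq, one_pow]
    rw [mul_pow] at e2
    linear_combination C kk ^ 12 * e + (X 0 * X 1 * (X 0 ^ 10 + 11 * X 0 ^ 5 * X 1 ^ 5 - X 1 ^ 10)) * e2

theorem inv_F20 : GenInv F20 := by
  refine ⟨?_, ?_, ?_⟩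
  · have e : ∀ u v : MvPolynomial (Fin 2) ℂ,
        u ^ 20 - 228 * (u ^ 15 * v ^ 5 - u ^ 5 * v ^ 15) + 494 * u ^ 10 * v ^ 10 + v ^ 20
        = (u ^ 5) ^ 4 - 228 * ((u ^ 5) ^ 3 * v ^ 5 - u ^ 5 * (v ^ 5) ^ 3)
          + 494 * (u ^ 5) ^ 2 * (v ^ 5) ^ 2 + (v ^ 5) ^ 4 := by intros; ring
    simp only [F20, e, map_add, map_sub, map_mul, map_pow, map_ofNat]
    rw [alpha_X0_5, alpha_X1_5]
    ring
  · simp only [F20, map_add, map_sub, map_mul, map_pow, map_ofNat, beta_X0, beta_X1]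
    ring
  · simp only [F20, map_add, map_sub, map_mul, map_pow, map_ofNat, gamma_X0, gamma_X1]
    have e := id_F20 (X 0 : MvPolynomial (Fin 2) ℂ) (X 1) (C tt) Ct_sq
    have e2 : (C kk ^ 2 * (C tt - 2) : MvPolynomial (Fin 2) ℂ) ^ 10 = 1 := by rw [Ck_sq, one_pow]
    rw [mul_pow] at e2
    generalize C tt * X 0 + X 1 = u at *
    generalize X 0 - C tt * X 1 = v at *
    generalize C tt - 2 = w at *
    linear_combination C kk ^ 20 * e + (X 0 ^ 20 - 228 * (X 0 ^ 15 * X 1 ^ 5 - X 0 ^ 5 * X 1 ^ 15)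
      + 494 * X 0 ^ 10 * X 1 ^ 10 + X 1 ^ 20) * e2

theorem inv_F30 : GenInv F30 := by
  refine ⟨?_, ?_, ?_⟩
  · have e : ∀ u v : MvPolynomial (Fin 2) ℂ,
        u ^ 30 + 522 * (u ^ 25 * v ^ 5 - u ^ 5 * v ^ 25)
          - 10005 * (u ^ 20 * v ^ 10 + u ^ 10 * v ^ 20) + v ^ 30
        = (u ^ 5) ^ 6 + 522 * ((u ^ 5) ^ 5 * v ^ 5 - u ^ 5 * (v ^ 5) ^ 5)
          - 10005 * ((u ^ 5) ^ 4 * (v ^ 5) ^ 2 + (u ^ 5) ^ 2 * (v ^ 5) ^ 4) + (v ^ 5) ^ 6 := by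
      intros; ring
    simp only [F30, e, map_add, map_sub, map_mul, map_pow, map_ofNat]
    rw [alpha_X0_5, alpha_X1_5]
    ring
  · simp only [F30, map_add, map_sub, map_mul, map_pow, map_ofNat, beta_X0, beta_X1]
    ring
  · simp only [F30, map_add, map_sub, map_mul, map_pow, map_ofNat, gamma_X0, gamma_X1]
    have e := id_F30 (X 0 : MvPolynomial (Fin 2) ℂ) (X 1) (C tt) Ct_sq
    have e2 : (C kk ^ 2 * (C tt - 2) : MvPolynomial (Fin 2) ℂ) ^ 15 = 1 := by rw [Ck_sq, one_pow]
    rw [mul_pow] at e2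
    generalize C tt * X 0 + X 1 = u at *
    generalize X 0 - C tt * X 1 = v at *
    generalize C tt - 2 = w at *
    linear_combination C kk ^ 30 * e + (X 0 ^ 30 + 522 * (X 0 ^ 25 * X 1 ^ 5 - X 0 ^ 5 * X 1 ^ 25)
      - 10005 * (X 0 ^ 20 * X 1 ^ 10 + X 0 ^ 10 * X 1 ^ 20) + X 1 ^ 30) * e2

/-! ### Linear forms -/

def lin (a b : ℂ) : MvPolynomial (Fin 2) ℂ := C a * X 0 + C b * X 1

theorem relprime_X : IsRelPrime (X 0 : MvPolynomial (Fin 2) ℂ) (X 1) := by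
  rw [(X_prime (R := ℂ) (i := (0 : Fin 2))).irreducible.isRelPrime_iff_not_dvd, X_dvd_X]
  simp

theorem relprime_lin (a b c d : ℂ) (h : a * d - b * c ≠ 0) : IsRelPrime (lin a b) (lin c d) := by
  intro f h1 h2
  have hC : (C (a * d - b * c)⁻¹ : MvPolynomial (Fin 2) ℂ) * (C a * C d - C b * C c) = 1 := by
    rw [← C_mul, ← C_mul, ← C_sub, ← C_mul, inv_mul_cancel₀ h, C_1]
  apply relprime_X
  · have : (X 0 : MvPolynomial (Fin 2) ℂ) =
        C (a * d - b * c)⁻¹ * (C d * lin a b - C b * lin c d) := by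
      unfold lin
      linear_combination (-X 0) * hC
    rw [this]
    exact Dvd.dvd.mul_left (dvd_sub (h1.mul_left _) (h2.mul_left _)) _
  · have : (X 1 : MvPolynomial (Fin 2) ℂ) =
        C (a * d - b * c)⁻¹ * (C a * lin c d - C c * lin a b) := by
      unfold lin
      linear_combination (-X 1) * hC
    rw [this]
    exact Dvd.dvd.mul_left (dvd_sub (h2.mul_left _) (h1.mul_left _)) _

theorem dvd_act {A : Matrix (Fin 2) (Fin 2) ℂ} {P L : MvPolynomial (Fin 2) ℂ}
    (hP : actHom A P = P) (h : L ∣ P) : actHom A L ∣ P := by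
  have := map_dvd (actHom A) h
  rwa [hP] at this

theorem lin_of_scale {P : MvPolynomial (Fin 2) ℂ} (c a b : ℂ) (h : lin (c * a) (c * b) ∣ P) :
    lin a b ∣ P := by
  refine dvd_trans ⟨C c, ?_⟩ h
  simp only [lin, C_mul]
  ring

theorem alpha_lin {P : MvPolynomial (Fin 2) ℂ} (hP : GenInv P) (a b : ℂ) (h : lin a b ∣ P) :
    lin a (b * zeta5 ^ 4) ∣ P := by
  have h1 := dvd_act hP.1 h
  apply lin_of_scale (-zeta5 ^ 3)
  convert h1 using 1
  have e : -zeta5 ^ 3 * (b * zeta5 ^ 4) = b * (-zeta5 ^ 2) := by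
    linear_combination (-b * zeta5 ^ 2) * zeta_pow
  rw [e]
  simp only [lin, map_add, map_mul, actHom_C, alpha_X0, alpha_X1]
  ring

theorem alpha_lin' {P : MvPolynomial (Fin 2) ℂ} (hP : GenInv P) (a b : ℂ) (h : lin a b ∣ P) :
    lin a (b * zeta5) ∣ P := by
  have h1 := alpha_lin hP _ _ (alpha_lin hP _ _ (alpha_lin hP _ _ (alpha_lin hP _ _ h)))
  convert h1 using 2
  linear_combination (-b * zeta5 * (zeta5 ^ 10 + zeta5 ^ 5 + 1)) * zeta_pow

theorem alpha_lin_pow {P : MvPolynomial (Fin 2) ℂ} (hP : GenInv P) (a b : ℂ) (h : lin a b ∣ P)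
    (j : ℕ) : lin a (b * zeta5 ^ j) ∣ P := by
  induction j with
  | zero => simpa using h
  | succ j ih =>
    rw [pow_succ, ← mul_assoc]
    exact alpha_lin' hP _ _ ih

theorem prod_lin (a b : ℂ) : ∏ j ∈ Finset.range 5, lin a (b * zeta5 ^ j)
    = C a ^ 5 * X 0 ^ 5 + C b ^ 5 * X 1 ^ 5 := by
  have hS : (1 + C zeta5 + C zeta5 ^ 2 + C zeta5 ^ 3 + C zeta5 ^ 4 : MvPolynomial (Fin 2) ℂ)
      = 0 := by
    have h := congrArg (C : ℂ → MvPolynomial (Fin 2) ℂ) zeta_sum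
    simpa only [C_add, C_pow, C_1, C_0] using h
  simp only [Finset.prod_range_succ, Finset.prod_range_zero, lin, C_mul, C_pow]
  generalize (C zeta5 : MvPolynomial (Fin 2) ℂ) = z at *
  have hz : z ^ 5 = 1 := by linear_combination (z - 1) * hS
  have e1 : (C a * X 0 : MvPolynomial (Fin 2) ℂ) ^ 5 + (C b * X 1) ^ 5
      = C a ^ 5 * X 0 ^ 5 + C b ^ 5 * X 1 ^ 5 := by ring
  rw [← e1]
  have e2 : ∀ w : MvPolynomial (Fin 2) ℂ, C b * w * X 1 = C b * X 1 * w := by intro w; ring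
  rw [e2, e2, e2, e2, e2]
  generalize (C a * X 0 : MvPolynomial (Fin 2) ℂ) = A
  generalize (C b * X 1 : MvPolynomial (Fin 2) ℂ) = B
  linear_combination (A ^ 4 * B + z * (1 + z ^ 2) * A ^ 3 * B ^ 2
    + z ^ 3 * (1 + z ^ 2) * A ^ 2 * B ^ 3 + z ^ 6 * A * B ^ 4) * hS + B ^ 5 * (z ^ 5 + 1) * hz

theorem relprime_family (a b : ℂ) (ha : a ≠ 0) (hb : b ≠ 0) (i j : ℕ) (hi : i < 5) (hj : j < 5)
    (hij : i ≠ j) : IsRelPrime (lin a (b * zeta5 ^ i)) (lin a (b * zeta5 ^ j)) := by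
  apply relprime_lin
  intro h
  have h1 : a * b * (zeta5 ^ j - zeta5 ^ i) = 0 := by linear_combination h
  have h2 : zeta5 ^ j = zeta5 ^ i := by
    rcases mul_eq_zero.1 h1 with h | h
    · exact absurd h (mul_ne_zero ha hb)
    · exact sub_eq_zero.1 h
  exact hij (zeta_prim.pow_inj hj hi h2).symm

theorem family_dvd {P : MvPolynomial (Fin 2) ℂ} (hP : GenInv P) (a b : ℂ) (ha : a ≠ 0)
    (hb : b ≠ 0) (h : lin a b ∣ P) : ∏ j ∈ Finset.range 5, lin a (b * zeta5 ^ j) ∣ P := by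
  apply Finset.prod_dvd_of_isRelPrime
  · intro i hi j hj hij
    exact relprime_family a b ha hb i j (by simpa using hi) (by simpa using hj) hij
  · intro i _
    exact alpha_lin_pow hP a b h i

theorem t_five : tt ^ 5 = 5 * tt - 3 := by
  linear_combination (tt ^ 3 - tt ^ 2 + 2 * tt - 3) * tt_sq

theorem t_rat : tt ≠ 7 / 11 := by
  intro h
  have h2 := tt_sq
  rw [h] at h2
  norm_num at h2

theorem t_ten : tt ^ 10 ≠ -1 := by
  intro h
  apply t_rat
  have : (tt ^ 5) ^ 2 = -1 := by rw [← h]; ring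
  rw [t_five] at this
  linear_combination (-1 / 55) * this + (25 / 55) * tt_sq

theorem relprime_cross (i j : ℕ) :
    IsRelPrime (lin 1 (-tt * zeta5 ^ i)) (lin tt (1 * zeta5 ^ j)) := by
  apply relprime_lin
  intro h
  have h1 : zeta5 ^ j = -(tt ^ 2 * zeta5 ^ i) := by linear_combination h
  have h2 := congrArg (· ^ 5) h1
  have hp : ∀ n : ℕ, (zeta5 ^ n) ^ 5 = 1 := by
    intro n; rw [← pow_mul, mul_comm, pow_mul, zeta_pow, one_pow]
  simp only [hp] at h2
  apply t_ten
  have h3 : (-(tt ^ 2 * zeta5 ^ i)) ^ 5 = -(tt ^ 10 * (zeta5 ^ i) ^ 5) := by ring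
  rw [h3, hp] at h2
  linear_combination h2

theorem F12_dvd {P : MvPolynomial (Fin 2) ℂ} (hP : GenInv P) (h : X 1 ∣ P) : F12 ∣ P := by
  have e0 : (X 0 : MvPolynomial (Fin 2) ℂ) = lin 1 0 := by simp [lin]
  have e1 : (X 1 : MvPolynomial (Fin 2) ℂ) = lin 0 1 := by simp [lin]
  have h0 : X 0 ∣ P := by
    have := dvd_act hP.2.1 h
    rw [beta_X1] at this
    exact neg_dvd.1 this
  have hA : lin 1 (-tt) ∣ P := by
    have := dvd_act hP.2.2 h
    rw [gamma_X1] at this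
    refine dvd_trans ⟨C kk, ?_⟩ this
    simp only [lin, C_neg, C_1]; ring
  have hB : lin tt 1 ∣ P := by
    have := dvd_act hP.2.2 h0
    rw [gamma_X0] at this
    refine dvd_trans ⟨C kk, ?_⟩ this
    simp only [lin, C_1]; ring
  have dA := family_dvd hP 1 (-tt) one_ne_zero (neg_ne_zero.2 tt_ne) hA
  have dB := family_dvd hP tt 1 tt_ne one_ne_zero hB
  have dAB := IsRelPrime.mul_dvd (IsRelPrime.prod_left fun i _ =>
    IsRelPrime.prod_right fun j _ => relprime_cross i j) dA dB
  have dX : X 0 * X 1 ∣ P := relprime_X.mul_dvd h0 h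
  have r0 : ∀ a b : ℂ, b ≠ 0 → ∀ j : ℕ, IsRelPrime (X 0) (lin a (b * zeta5 ^ j)) := by
    intro a b hb j
    rw [e0]
    apply relprime_lin
    simpa using ⟨hb, fun h => absurd h zeta_ne⟩
  have r1 : ∀ a b : ℂ, a ≠ 0 → ∀ j : ℕ, IsRelPrime (X 1) (lin a (b * zeta5 ^ j)) := by
    intro a b ha j
    rw [e1]
    apply relprime_lin
    simpa using ha
  have dall := IsRelPrime.mul_dvd (IsRelPrime.mul_right
    (IsRelPrime.mul_left
      (IsRelPrime.prod_right fun i (_ : i ∈ Finset.range 5) => r0 1 (-tt) (neg_ne_zero.2 tt_ne) i)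
      (IsRelPrime.prod_right fun i (_ : i ∈ Finset.range 5) => r1 1 (-tt) one_ne_zero i))
    (IsRelPrime.mul_left
      (IsRelPrime.prod_right fun i (_ : i ∈ Finset.range 5) => r0 tt 1 one_ne_zero i)
      (IsRelPrime.prod_right fun i (_ : i ∈ Finset.range 5) => r1 tt 1 tt_ne i))) dX dAB
  refine dvd_trans ⟨C tt ^ 5, ?_⟩ dall
  rw [prod_lin, prod_lin]
  have h5 : (C tt : MvPolynomial (Fin 2) ℂ) ^ 5 = 5 * C tt - 3 := by
    linear_combination (C tt ^ 3 - C tt ^ 2 + 2 * C tt - 3) * Ct_sq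
  simp only [F12, C_neg, C_1]
  have h10 : (C tt : MvPolynomial (Fin 2) ℂ) ^ 10 = 1 - 11 * C tt ^ 5 := by
    have : (C tt : MvPolynomial (Fin 2) ℂ) ^ 10 = (C tt ^ 5) ^ 2 := by ring
    rw [this, h5]
    linear_combination 25 * Ct_sq
  linear_combination (-(X 0 * X 1 * X 0 ^ 5 * X 1 ^ 5)) * h10

/-! ### Coefficients -/

theorem homog_deg {P : MvPolynomial (Fin 2) ℂ} {d : ℕ} (hP : P.IsHomogeneous d)
    {m : Fin 2 →₀ ℕ} (hm : m ∈ P.support) : m 0 + m 1 = d := by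
  by_contra h
  rw [mem_support_iff] at hm
  apply hm
  apply hP.coeff_eq_zero
  rwa [Finsupp.degree_eq_sum, Fin.sum_univ_two]

theorem X1_dvd {P : MvPolynomial (Fin 2) ℂ} {d : ℕ} (hP : P.IsHomogeneous d)
    (h : coeff (Finsupp.single 0 d) P = 0) : X 1 ∣ P := by
  rw [P.as_sum]
  apply Finset.dvd_sum
  intro m hm
  rw [X_dvd_monomial]
  right
  intro h1
  have hd := homog_deg hP hm
  have hm' : m = Finsupp.single 0 d := by
    ext i
    fin_cases i
    · simp only [Fin.zero_eta, Finsupp.single_eq_same]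
      omega
    · simpa using h1
  rw [hm', mem_support_iff] at hm
  exact hm h

theorem coeff_alpha (P : MvPolynomial (Fin 2) ℂ) (m : Fin 2 →₀ ℕ) :
    coeff m (actHom alpha P) = (-zeta5 ^ 3) ^ m 0 * (-zeta5 ^ 2) ^ m 1 * coeff m P := by
  induction P using MvPolynomial.induction_on' with
  | add p q hp hq => rw [map_add, coeff_add, coeff_add, hp, hq]; ring
  | monomial n a =>
    have : actHom alpha (monomial n a)
        = monomial n ((-zeta5 ^ 3) ^ n 0 * (-zeta5 ^ 2) ^ n 1 * a) := by
      rw [monomial_eq, monomial_eq, Finsupp.prod_fintype _ _ (by simp), Fin.prod_univ_two]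
      simp only [map_mul, map_pow, actHom_C, alpha_X0, alpha_X1]
      ring
    rw [this, coeff_monomial, coeff_monomial]
    split_ifs with h
    · rw [h]
    · simp

theorem alpha_supp {P : MvPolynomial (Fin 2) ℂ} (hP : GenInv P) (m : Fin 2 →₀ ℕ)
    (h : coeff m P ≠ 0) : (-zeta5 ^ 3) ^ m 0 * (-zeta5 ^ 2) ^ m 1 = 1 := by
  have := coeff_alpha P m
  rw [hP.1] at this
  exact mul_right_cancel₀ h (by rw [← this, one_mul])

theorem ten_dvd {P : MvPolynomial (Fin 2) ℂ} (hP : GenInv P) (d : ℕ)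
    (h : coeff (Finsupp.single 0 d) P ≠ 0) : 10 ∣ d := by
  have h1 := alpha_supp hP _ h
  simp at h1
  have h5 : 5 ∣ d := by
    have h2 : zeta5 ^ (6 * d) = 1 := by
      have : zeta5 ^ (6 * d) = ((-zeta5 ^ 3) ^ d) ^ 2 := by
        rw [← pow_mul, mul_comm d 2, pow_mul, pow_mul]
        congr 1
        ring
      rw [this, h1, one_pow]
    have := zeta_prim.dvd_of_pow_eq_one _ h2
    omega
  have h2 : 2 ∣ d := by
    obtain ⟨e, rfl⟩ := h5
    rw [pow_mul] at h1
    have e1 : (-zeta5 ^ 3) ^ 5 = -1 := by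
      linear_combination (-(zeta5 ^ 10 + zeta5 ^ 5 + 1)) * zeta_pow
    rw [e1, neg_one_pow_eq_one_iff_even (by norm_num)] at h1
    exact (even_iff_two_dvd.1 h1).mul_left 5
  omega

theorem no_deg_ten {P : MvPolynomial (Fin 2) ℂ} (hP : GenInv P) (hh : P.IsHomogeneous 10) :
    coeff (Finsupp.single 0 10) P = 0 := by
  by_contra hne
  let m1 : Fin 2 →₀ ℕ := Finsupp.single 0 10
  let m2 : Fin 2 →₀ ℕ := Finsupp.single 0 5 + Finsupp.single 1 5
  let m3 : Fin 2 →₀ ℕ := Finsupp.single 1 10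
  have hs : P.support ⊆ {m1, m2, m3} := by
    intro m hm
    have hd := homog_deg hh hm
    have ha := alpha_supp hP m (mem_support_iff.1 hm)
    have h5 : zeta5 ^ (6 * m 0 + 4 * m 1) = 1 := by
      have : zeta5 ^ (6 * m 0 + 4 * m 1) = ((-zeta5 ^ 3) ^ m 0 * (-zeta5 ^ 2) ^ m 1) ^ 2 := by
        rw [mul_pow, ← pow_mul, ← pow_mul, mul_comm (m 0) 2, mul_comm (m 1) 2, pow_mul (-zeta5 ^ 3),
          pow_mul (-zeta5 ^ 2), pow_add, pow_mul, pow_mul zeta5 4]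
        congr 2 <;> ring
      rw [this, ha, one_pow]
    have h6 := zeta_prim.dvd_of_pow_eq_one _ h5
    have h7 : m 0 = 0 ∧ m 1 = 10 ∨ m 0 = 5 ∧ m 1 = 5 ∨ m 0 = 10 ∧ m 1 = 0 := by omega
    simp only [Finset.mem_insert, Finset.mem_singleton]
    rcases h7 with ⟨a, b⟩ | ⟨a, b⟩ | ⟨a, b⟩
    · right; right; ext i; fin_cases i <;> simp [m3, a, b]
    · right; left; ext i; fin_cases i <;> simp [m2, a, b]
    · left; ext i; fin_cases i <;> simp [m1, a, b]
  have n12 : m1 ≠ m2 := by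
    intro h; have := DFunLike.congr_fun h 0; simp [m1, m2] at this
  have n13 : m1 ≠ m3 := by
    intro h; have := DFunLike.congr_fun h 0; simp [m1, m3] at this
  have n23 : m2 ≠ m3 := by
    intro h; have := DFunLike.congr_fun h 0; simp [m2, m3] at this
  have ev : ∀ v : Fin 2 → ℂ, eval v P = coeff m1 P * v 0 ^ 10 + coeff m2 P * (v 0 ^ 5 * v 1 ^ 5)
      + coeff m3 P * v 1 ^ 10 := by
    intro v
    rw [eval_eq', Finset.sum_subset hs (fun m _ hm => by rw [notMem_support_iff.1 hm, zero_mul])]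
    rw [Finset.sum_insert (by simp [n12, n13]), Finset.sum_insert (by simp [n23]),
      Finset.sum_singleton]
    simp [m1, m2, m3, Fin.prod_univ_two, add_assoc]
  have hb : ∀ v : Fin 2 → ℂ, eval (fun i => beta i 0 * v 0 + beta i 1 * v 1) P = eval v P := by
    intro v; rw [← eval_actHom, hP.2.1]
  have hg : ∀ v : Fin 2 → ℂ, eval (fun i => gamma i 0 * v 0 + gamma i 1 * v 1) P = eval v P := by
    intro v; rw [← eval_actHom, hP.2.2]
  have b1 := hb ![1, 0]
  have b2 := hb ![1, 1]
  have g1 := hg ![1, 0]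
  rw [ev, ev] at b1 b2 g1
  have g00 : gamma 0 0 = kk * tt := by simp [gamma, kk, tt, zeta_inv]
  have g10 : gamma 1 0 = kk := by simp [gamma, kk]
  simp [beta] at b1 b2
  simp [g00, g10] at g1
  have hne' : coeff m1 P ≠ 0 := hne
  generalize coeff m1 P = p at *
  generalize coeff m2 P = q at *
  generalize coeff m3 P = r at *
  have hq : q = 0 := by linear_combination (-1 / 2) * b2
  have hr : r = p := by linear_combination b1
  rw [hr] at g1
  have g2 : p * (kk ^ 10 * (tt ^ 10 + 1)) = p * 1 := by linear_combination g1 - (kk * tt) ^ 5 * kk ^ 5 * hq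
  have g3 := mul_left_cancel₀ hne' g2
  have k5 : (kk ^ 2 * (tt - 2)) ^ 5 = 1 := by rw [kk_sq, one_pow]
  have g4 : kk ^ 10 * (tt ^ 10 + 1) = kk ^ 10 * (tt - 2) ^ 5 := by rw [g3]; rw [← k5]; ring
  have g5 := mul_left_cancel₀ (pow_ne_zero 10 kk_ne) g4
  have g6 : tt ^ 10 = (tt ^ 5) ^ 2 := by ring
  have g7 : (tt - 2) ^ 5 = 275 * tt - 175 := by
    linear_combination (tt ^ 3 - 11 * tt ^ 2 + 52 * tt - 143) * tt_sq
  rw [g6, t_five, g7] at g5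
  apply t_rat
  linear_combination (-1 / 330) * g5 + (25 / 330) * tt_sq

theorem homog_mon (c : ℂ) (i j n : ℕ) (h : i + j = n) :
    (C c * (X 0 ^ i * X 1 ^ j) : MvPolynomial (Fin 2) ℂ).IsHomogeneous n := by
  subst h
  exact ((isHomogeneous_X_pow 0 i).mul (isHomogeneous_X_pow 1 j)).C_mul c

theorem homog_F12 : F12.IsHomogeneous 12 := by
  have e : F12 = C 1 * (X 0 ^ 11 * X 1 ^ 1) + C 11 * (X 0 ^ 6 * X 1 ^ 6)
      + C (-1) * (X 0 ^ 1 * X 1 ^ 11) := by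
    simp only [F12, C_neg, C_1, map_ofNat]; ring
  rw [e]
  exact ((homog_mon _ _ _ _ (by norm_num)).add (homog_mon _ _ _ _ (by norm_num))).add (homog_mon _ _ _ _ (by norm_num))

theorem homog_F20 : F20.IsHomogeneous 20 := by
  have e : F20 = C 1 * (X 0 ^ 20 * X 1 ^ 0) + C (-228) * (X 0 ^ 15 * X 1 ^ 5)
      + C 228 * (X 0 ^ 5 * X 1 ^ 15) + C 494 * (X 0 ^ 10 * X 1 ^ 10)
      + C 1 * (X 0 ^ 0 * X 1 ^ 20) := by
    simp only [F20, C_neg, C_1, map_ofNat]; ring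
  rw [e]
  exact ((((homog_mon _ _ _ _ (by norm_num)).add (homog_mon _ _ _ _ (by norm_num))).add (homog_mon _ _ _ _ (by norm_num))).add
    (homog_mon _ _ _ _ (by norm_num))).add (homog_mon _ _ _ _ (by norm_num))

theorem homog_F30 : F30.IsHomogeneous 30 := by
  have e : F30 = C 1 * (X 0 ^ 30 * X 1 ^ 0) + C 522 * (X 0 ^ 25 * X 1 ^ 5)
      + C (-522) * (X 0 ^ 5 * X 1 ^ 25) + C (-10005) * (X 0 ^ 20 * X 1 ^ 10)
      + C (-10005) * (X 0 ^ 10 * X 1 ^ 20) + C 1 * (X 0 ^ 0 * X 1 ^ 30) := by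
    simp only [F30, C_neg, C_1, map_ofNat]; ring
  rw [e]
  exact (((((homog_mon _ _ _ _ (by norm_num)).add (homog_mon _ _ _ _ (by norm_num))).add
    (homog_mon _ _ _ _ (by norm_num))).add (homog_mon _ _ _ _ (by norm_num))).add (homog_mon _ _ _ _ (by norm_num))).add
    (homog_mon _ _ _ _ (by norm_num))

theorem coeff_eq_eval {P : MvPolynomial (Fin 2) ℂ} {d : ℕ} (hP : P.IsHomogeneous d) :
    coeff (Finsupp.single 0 d) P = eval ![1, 0] P := by
  have h : X 1 ∣ P - C (coeff (Finsupp.single 0 d) P) * (X 0 ^ d * X 1 ^ 0) := by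
    apply X1_dvd (hP.sub (homog_mon _ _ _ _ (add_zero d)))
    rw [coeff_sub, coeff_C_mul, pow_zero, mul_one, coeff_X_pow]
    simp
  obtain ⟨Q, hQ⟩ := h
  have := congrArg (eval ![(1 : ℂ), 0]) hQ
  simp at this
  linear_combination -this

theorem F12_ne : F12 ≠ 0 := by
  intro h
  have := congrArg (eval ![(1 : ℂ), 1]) h
  simp [F12] at this

/-- The subalgebra generated by the three forms. -/
abbrev Alg3 : Subalgebra ℂ (MvPolynomial (Fin 2) ℂ) :=
  Algebra.adjoin ℂ ({F30, F20, F12} : Set (MvPolynomial (Fin 2) ℂ))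

theorem mem30 : F30 ∈ Alg3 := Algebra.subset_adjoin (by simp)
theorem mem20 : F20 ∈ Alg3 := Algebra.subset_adjoin (by simp)
theorem mem12 : F12 ∈ Alg3 := Algebra.subset_adjoin (by simp)
theorem memC (c : ℂ) : C c ∈ Alg3 := Alg3.algebraMap_mem c

theorem mem_of_coeff_zero (n : ℕ)
    (ih : ∀ Q : MvPolynomial (Fin 2) ℂ, GenInv Q → Q.totalDegree < n → Q ∈ Alg3)
    {P : MvPolynomial (Fin 2) ℂ} {d : ℕ} (hd : d ≤ n) (hP : GenInv P) (hh : P.IsHomogeneous d)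
    (hc : coeff (Finsupp.single 0 d) P = 0) : P ∈ Alg3 := by
  obtain ⟨Q, rfl⟩ := F12_dvd hP (X1_dvd hh hc)
  apply mul_mem mem12
  by_cases hQ : Q = 0
  · rw [hQ]; exact zero_mem _
  · apply ih _ (inv_F12.cancel F12_ne hP)
    have h1 := hh.totalDegree_le
    rw [totalDegree_mul_of_isDomain F12_ne hQ, homog_F12.totalDegree F12_ne] at h1
    omega

theorem mem_of_homog (n : ℕ)
    (ih : ∀ Q : MvPolynomial (Fin 2) ℂ, GenInv Q → Q.totalDegree < n → Q ∈ Alg3)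
    {P : MvPolynomial (Fin 2) ℂ} {d : ℕ} (hd : d ≤ n) (hP : GenInv P) (hh : P.IsHomogeneous d) :
    P ∈ Alg3 := by
  by_cases hc : coeff (Finsupp.single 0 d) P = 0
  · exact mem_of_coeff_zero n ih hd hP hh hc
  obtain ⟨e, rfl⟩ := ten_dvd hP d hc
  have he : e ≠ 1 := by
    rintro rfl
    exact hc (no_deg_ten hP hh)
  obtain ⟨a, b, hab⟩ : ∃ a b : ℕ, e = 2 * a + 3 * b := by
    rcases Nat.even_or_odd' e with ⟨k, hk | hk⟩
    · exact ⟨k, 0, by omega⟩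
    · exact ⟨k - 1, 1, by omega⟩
  set c := coeff (Finsupp.single 0 (10 * e)) P with hcdef
  have hM : (F20 ^ a * F30 ^ b).IsHomogeneous (10 * e) := by
    have := (homog_F20.pow a).mul (homog_F30.pow b)
    convert this using 1
    omega
  have hM' : C c * (F20 ^ a * F30 ^ b) ∈ Alg3 :=
    mul_mem (memC c) (mul_mem (pow_mem mem20 a) (pow_mem mem30 b))
  have hR : P - C c * (F20 ^ a * F30 ^ b) ∈ Alg3 := by
    apply mem_of_coeff_zero n ih hd
      (hP.sub ((GenInv.const c).mul ((inv_F20.pow a).mul (inv_F30.pow b))))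
      (hh.sub (hM.C_mul c))
    rw [coeff_sub, coeff_C_mul, ← hcdef, coeff_eq_eval hM]
    simp [F20, F30]
  have := add_mem hR hM'
  rwa [sub_add_cancel] at this

theorem mem_of_inv (n : ℕ) : ∀ P : MvPolynomial (Fin 2) ℂ, GenInv P → P.totalDegree < n →
    P ∈ Alg3 := by
  induction n with
  | zero => intro P _ h; omega
  | succ n ih =>
    intro P hP hn
    rw [← sum_homogeneousComponent P]
    apply sum_mem
    intro i hi
    rw [Finset.mem_range] at hi
    exact mem_of_homog n ih (by omega) (hP.comp i) (homogeneousComponent_isHomogeneous i P)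

theorem inv_of_mem {P : MvPolynomial (Fin 2) ℂ} (h : P ∈ Alg3) : GenInv P := by
  induction h using Algebra.adjoin_induction with
  | mem x hx =>
    rcases hx with rfl | rfl | rfl
    · exact inv_F30
    · exact inv_F20
    · exact inv_F12
  | algebraMap r => exact GenInv.const r
  | add x y _ _ hx hy => exact hx.add hy
  | mul x y _ _ hx hy => exact hx.mul hy

theorem stmt2 (P : MvPolynomial (Fin 2) ℂ) :
    (∀ g ∈ Ibar, act (g : Matrix (Fin 2) (Fin 2) ℂ) P = P) ↔
      P ∈ Algebra.adjoin ℂ ({F30, F20, F12} : Set (MvPolynomial (Fin 2) ℂ)) := by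
  rw [inv_iff]
  exact ⟨fun h => mem_of_inv _ P h (Nat.lt_succ_self _), inv_of_mem⟩
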